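/- arXiv:2601.06957 — 3 statements merged into one kernel-verified Lean document; each statement's English description precedes it below -/
import Mathlib

section
/- For every ξ = (ξ₁, ξ₂) ∈ ℝ², the characteristic polynomial of the 9×9 real matrix 𝒜(ξ) is det(λ·I₉ − 𝒜(ξ)) = λ⁵ (λ − |ξ|)² (λ + |ξ|)² = λ⁵ (λ² − |ξ|²)², where |ξ|² = ξ₁² + ξ₂². -/
/-- The principal symbol `𝒜(ξ)` of the constraint-propagation system, acting on
`ℝ⁹` with coordinates `(M₁, M₂, U₁₁, U₁₂, U₂₁, U₂₂, H, N₁, N₂)`. -/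
def constraintSymbol (ξ₁ ξ₂ : ℝ) : Matrix (Fin 9) (Fin 9) ℝ :=
  !![0, 0, -ξ₁, -ξ₂, 0, 0, ξ₁, 0, 0;
     0, 0, 0, 0, -ξ₁, -ξ₂, ξ₂, 0, 0;
     0, 0, 0, 0, 0, 0, 0, 0, 0;
     -ξ₂, ξ₁, 0, 0, 0, 0, 0, 0, 0;
     ξ₂, -ξ₁, 0, 0, 0, 0, 0, 0, 0;
     0, 0, 0, 0, 0, 0, 0, 0, 0;
     ξ₁, ξ₂, 0, 0, 0, 0, 0, 0, 0;
     0, 0, 0, 0, 0, 0, 0, 0, 0;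
     0, 0, 0, 0, 0, 0, 0, 0, 0]

/-- A determinant whose `i`-th row vanishes off the diagonal expands into a single minor. -/
lemma Matrix.det_eq_mul_det_of_row_eq_zero {R : Type*} [CommRing R] {n : ℕ}
    (M : Matrix (Fin (n + 1)) (Fin (n + 1)) R) (i : Fin (n + 1))
    (h : ∀ j, j ≠ i → M i j = 0) :
    M.det = M i i * (M.submatrix i.succAbove i.succAbove).det := by
  rw [Matrix.det_succ_row M i, Finset.sum_eq_single i]
  · simp [← two_mul]
  · intro j _ hj
    simp [h j hj]
  · simp

/-- The trivially propagated components `U₁₁, U₂₂, N₁, N₂` split off from `λI₉ − 𝒜(ξ)`. -/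
lemma constraintSymbol_det_eq_mul_det (ξ₁ ξ₂ l : ℝ) :
    (l • (1 : Matrix (Fin 9) (Fin 9) ℝ) - constraintSymbol ξ₁ ξ₂).det
      = l ^ 4 * (!![l, 0, ξ₂, 0, -ξ₁;
                    0, l, 0, ξ₁, -ξ₂;
                    ξ₂, -ξ₁, l, 0, 0;
                    -ξ₂, ξ₁, 0, l, 0;
                    -ξ₁, -ξ₂, 0, 0, l] : Matrix (Fin 5) (Fin 5) ℝ).det := by
  rw [Matrix.det_eq_mul_det_of_row_eq_zero _ 8, Matrix.det_eq_mul_det_of_row_eq_zero _ 7,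
    Matrix.det_eq_mul_det_of_row_eq_zero _ 5, Matrix.det_eq_mul_det_of_row_eq_zero _ 2]
  · have h : ((((l • (1 : Matrix (Fin 9) (Fin 9) ℝ) - constraintSymbol ξ₁ ξ₂).submatrix
        (Fin.succAbove 8) (Fin.succAbove 8)).submatrix (Fin.succAbove 7) (Fin.succAbove 7)).submatrix
        (Fin.succAbove 5) (Fin.succAbove 5)).submatrix (Fin.succAbove 2) (Fin.succAbove 2)
        = !![l, 0, ξ₂, 0, -ξ₁;
             0, l, 0, ξ₁, -ξ₂;
             ξ₂, -ξ₁, l, 0, 0;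
             -ξ₂, ξ₁, 0, l, 0;
             -ξ₁, -ξ₂, 0, 0, l] := by
      ext i j
      fin_cases i <;> fin_cases j <;>
        simp [constraintSymbol, Fin.succAbove, Fin.lt_def]
    rw [h]
    simp [constraintSymbol, Fin.succAbove, Fin.lt_def]
    ring
  all_goals
    intro j hj
    fin_cases j <;>
      simp_all [constraintSymbol, Fin.succAbove, Fin.lt_def]

/-- The characteristic polynomial of `𝒜(ξ)` factors as
`det(λI₉ − 𝒜(ξ)) = λ⁵ (λ − |ξ|)² (λ + |ξ|)² = λ⁵ (λ² − |ξ|²)²`. -/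
theorem constraintSymbol_charpoly (ξ₁ ξ₂ : ℝ) (l : ℝ) :
    (l • (1 : Matrix (Fin 9) (Fin 9) ℝ) - constraintSymbol ξ₁ ξ₂).det
        = l ^ 5 * (l - Real.sqrt (ξ₁ ^ 2 + ξ₂ ^ 2)) ^ 2
            * (l + Real.sqrt (ξ₁ ^ 2 + ξ₂ ^ 2)) ^ 2 ∧
    (l • (1 : Matrix (Fin 9) (Fin 9) ℝ) - constraintSymbol ξ₁ ξ₂).det
        = l ^ 5 * (l ^ 2 - (ξ₁ ^ 2 + ξ₂ ^ 2)) ^ 2 := by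
  have h : (l • (1 : Matrix (Fin 9) (Fin 9) ℝ) - constraintSymbol ξ₁ ξ₂).det
      = l ^ 5 * (l ^ 2 - (ξ₁ ^ 2 + ξ₂ ^ 2)) ^ 2 := by
    rw [constraintSymbol_det_eq_mul_det]
    simp [Matrix.det_succ_row_zero, Fin.sum_univ_succ, Fin.succAbove]
    ring
  have hs : Real.sqrt (ξ₁ ^ 2 + ξ₂ ^ 2) ^ 2 = ξ₁ ^ 2 + ξ₂ ^ 2 := Real.sq_sqrt (by positivity)
  refine ⟨?_, h⟩
  rw [h, mul_assoc, ← mul_pow, mul_comm (l - _), ← sq_sub_sq, hs]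
end

section
/- For every ξ = (ξ₁, ξ₂) ∈ ℝ², the matrix 𝒜(ξ) satisfies the cubic identity 𝒜(ξ)³ = |ξ|² 𝒜(ξ). Consequently, for every ξ ≠ 0 the minimal polynomial of 𝒜(ξ) divides λ(λ − |ξ|)(λ + |ξ|), which has distinct roots, so 𝒜(ξ) is diagonalizable over ℝ. -/
open Polynomial

open scoped Matrix in
/-- A square matrix whose eigenvectors span the whole space is diagonalizable. -/
theorem Matrix.exists_eq_conj_isDiag_of_span_eigenvectors {n K : Type*} [Fintype n]
    [DecidableEq n] [Field K] (A : Matrix n n K)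
    (hA : Submodule.span K {v : n → K | ∃ μ : K, A *ᵥ v = μ • v} = ⊤) :
    ∃ P D : Matrix n n K, IsUnit P ∧ D.IsDiag ∧ A = P * D * P⁻¹ := by
  let b₀ := Module.Basis.ofSpan hA.ge
  have hb₀ (i) : ∃ μ : K, A *ᵥ b₀ i = μ • b₀ i :=
    Module.Basis.ofSpan_subset hA.ge ⟨i, rfl⟩
  let b : Module.Basis n K (n → K) := b₀.reindex (b₀.indexEquiv (Pi.basisFun K n))
  have hb (j : n) : ∃ μ : K, A *ᵥ b j = μ • b j := by
    simpa [b] using hb₀ _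
  choose μ hμ using hb
  let P : Matrix n n K := Matrix.of fun i j => b j i
  have hP : IsUnit P := Matrix.linearIndependent_cols_iff_isUnit.mp b.linearIndependent
  refine ⟨P, Matrix.diagonal μ, hP, Matrix.isDiag_diagonal μ, ?_⟩
  have hAP : A * P = P * Matrix.diagonal μ := by
    ext i j
    rw [Matrix.mul_diagonal]
    exact (congrFun (hμ j) i).trans (mul_comm _ _)
  rw [← hAP, Matrix.mul_nonsing_inv_cancel_right _ _ ((Matrix.isUnit_iff_isUnit_det P).mp hP)]

open scoped Matrix in
/-- Over a field of characteristic not two, a matrix `A` with `A³ = r² A` and `r ≠ 0` has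
eigenvectors spanning the whole space. -/
theorem Matrix.span_eigenvectors_eq_top_of_pow_three_eq {n K : Type*} [Fintype n]
    [DecidableEq n] [Field K] [NeZero (2 : K)] {A : Matrix n n K} {r : K} (hr : r ≠ 0)
    (hA : A ^ 3 = r ^ 2 • A) :
    Submodule.span K {v : n → K | ∃ μ : K, A *ᵥ v = μ • v} = ⊤ := by
  have h2 : (2 : K) ≠ 0 := two_ne_zero
  refine eq_top_iff.mpr fun v _ => ?_
  have h3 : A *ᵥ (A *ᵥ (A *ᵥ v)) = r ^ 2 • (A *ᵥ v) := by
    simpa [pow_succ, Matrix.mulVec_mulVec, Matrix.mul_assoc, Matrix.smul_mulVec] using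
      congrArg (· *ᵥ v) hA
  have hzero : A *ᵥ (r ^ 2 • v - A *ᵥ (A *ᵥ v)) = (0 : K) • (r ^ 2 • v - A *ᵥ (A *ᵥ v)) := by
    rw [Matrix.mulVec_sub, Matrix.mulVec_smul, h3, sub_self, zero_smul]
  have hpos : A *ᵥ (A *ᵥ (A *ᵥ v) + r • (A *ᵥ v)) = r • (A *ᵥ (A *ᵥ v) + r • (A *ᵥ v)) := by
    rw [Matrix.mulVec_add, Matrix.mulVec_smul, h3]
    module
  have hneg : A *ᵥ (A *ᵥ (A *ᵥ v) - r • (A *ᵥ v)) =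
      (-r) • (A *ᵥ (A *ᵥ v) - r • (A *ᵥ v)) := by
    rw [Matrix.mulVec_sub, Matrix.mulVec_smul, h3]
    module
  have hv : v = (r ^ 2)⁻¹ • (r ^ 2 • v - A *ᵥ (A *ᵥ v)) +
      ((2 * r ^ 2)⁻¹ • (A *ᵥ (A *ᵥ v) + r • (A *ᵥ v)) +
        (2 * r ^ 2)⁻¹ • (A *ᵥ (A *ᵥ v) - r • (A *ᵥ v))) := by
    ext i
    simp only [Pi.add_apply, Pi.smul_apply, Pi.sub_apply, smul_eq_mul]
    field_simp
    ring
  rw [hv]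
  exact add_mem (Submodule.smul_mem _ _ (Submodule.subset_span ⟨_, hzero⟩))
    (add_mem (Submodule.smul_mem _ _ (Submodule.subset_span ⟨_, hpos⟩))
      (Submodule.smul_mem _ _ (Submodule.subset_span ⟨_, hneg⟩)))

set_option maxHeartbeats 1000000 in
theorem constraintSymbol_pow_three (ξ₁ ξ₂ : ℝ) :
    constraintSymbol ξ₁ ξ₂ ^ 3 = (ξ₁ ^ 2 + ξ₂ ^ 2) • constraintSymbol ξ₁ ξ₂ := by
  rw [pow_succ, pow_two]
  ext i j
  fin_cases i <;> fin_cases j <;>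
    simp [constraintSymbol, Matrix.mul_apply, Fin.sum_univ_succ, -mul_eq_mul_right_iff,
      -mul_eq_zero] <;> ring

/-- `𝒜(ξ)³ = |ξ|² 𝒜(ξ)`; consequently, for `ξ ≠ 0` the minimal
polynomial of `𝒜(ξ)` divides `λ(λ − |ξ|)(λ + |ξ|)`, which has distinct roots,
so `𝒜(ξ)` is diagonalizable over `ℝ`. -/
theorem constraintSymbol_cubic_identity_and_diagonalizable (ξ₁ ξ₂ : ℝ) :
    (constraintSymbol ξ₁ ξ₂) ^ 3 = (ξ₁ ^ 2 + ξ₂ ^ 2) • constraintSymbol ξ₁ ξ₂ ∧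
    ((ξ₁, ξ₂) ≠ (0, 0) →
      (minpoly ℝ (constraintSymbol ξ₁ ξ₂) ∣
          X * (X - C (Real.sqrt (ξ₁ ^ 2 + ξ₂ ^ 2)))
            * (X + C (Real.sqrt (ξ₁ ^ 2 + ξ₂ ^ 2)))) ∧
      (∃ P D : Matrix (Fin 9) (Fin 9) ℝ, IsUnit P ∧ D.IsDiag ∧
          constraintSymbol ξ₁ ξ₂ = P * D * P⁻¹)) := by
  refine ⟨constraintSymbol_pow_three ξ₁ ξ₂, fun hξ => ?_⟩
  have hpos : 0 < ξ₁ ^ 2 + ξ₂ ^ 2 := by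
    by_contra! h
    have h₁ : ξ₁ = 0 := by nlinarith [sq_nonneg ξ₁, sq_nonneg ξ₂]
    have h₂ : ξ₂ = 0 := by nlinarith [sq_nonneg ξ₁, sq_nonneg ξ₂]
    exact hξ (by rw [h₁, h₂])
  have hA : constraintSymbol ξ₁ ξ₂ ^ 3 =
      Real.sqrt (ξ₁ ^ 2 + ξ₂ ^ 2) ^ 2 • constraintSymbol ξ₁ ξ₂ := by
    rw [Real.sq_sqrt hpos.le, constraintSymbol_pow_three]
  refine ⟨minpoly.dvd _ _ ?_, Matrix.exists_eq_conj_isDiag_of_span_eigenvectors _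
    (Matrix.span_eigenvectors_eq_top_of_pow_three_eq (Real.sqrt_pos.mpr hpos).ne' hA)⟩
  have hpoly (r : ℝ) : X * (X - C r) * (X + C r) = X ^ 3 - C (r ^ 2) * X := by
    rw [C_pow]
    ring
  rw [hpoly, map_sub, map_mul, map_pow, aeval_X, aeval_C, hA, ← Algebra.smul_def, sub_self]
end

section
/- For every ξ = (ξ₁, ξ₂) ∈ ℝ² with ξ ≠ 0, the matrix 𝒜(ξ) is diagonalizable over ℝ and its spectrum consists exactly of the eigenvalues 0, |ξ| and −|ξ|, with algebraic (and geometric) multiplicities 5, 2 and 2 respectively; in particular the eigenvalues and their multiplicities are independent of the direction of ξ. -/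
open Module in
/-- The geometric multiplicity of `μ` for a diagonalized matrix counts its diagonal entries. -/
theorem Matrix.finrank_eigenspace_conj_diagonal {K n : Type*} [Field K] [DecidableEq K]
    [Fintype n] [DecidableEq n] {P : Matrix n n K} (hP : IsUnit P) (d : n → K) (μ : K) :
    finrank K (End.eigenspace (P * Matrix.diagonal d * P⁻¹).mulVecLin μ) =
      Fintype.card {i // d i = μ} := by
  have hdet : IsUnit P.det := (Matrix.isUnit_iff_isUnit_det P).1 hP
  have hdet' : IsUnit (P⁻¹).det := Matrix.isUnit_nonsing_inv_det P hdet
  have hsub : (P * Matrix.diagonal d * P⁻¹).mulVecLin - μ • (1 : End K (n → K)) =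
      (P * Matrix.diagonal (fun i => d i - μ) * P⁻¹).mulVecLin := by
    have hd : Matrix.diagonal (fun i => d i - μ) = Matrix.diagonal d - μ • (1 : Matrix n n K) := by
      rw [← Matrix.diagonal_sub, Matrix.smul_one_eq_diagonal]
    rw [hd, mul_sub, sub_mul, mul_smul_comm, mul_one, smul_mul_assoc,
      Matrix.mul_nonsing_inv P hdet]
    refine LinearMap.ext fun v => ?_
    simp only [LinearMap.sub_apply, LinearMap.smul_apply, End.one_apply,
      Matrix.mulVecLin_apply, Matrix.sub_mulVec, Matrix.smul_mulVec, Matrix.one_mulVec]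
  have hrank : finrank K (LinearMap.range
      (P * Matrix.diagonal (fun i => d i - μ) * P⁻¹).mulVecLin) =
      Fintype.card {i // d i - μ ≠ 0} := by
    change Matrix.rank _ = _
    rw [Matrix.rank_mul_eq_left_of_isUnit_det _ _ hdet',
      Matrix.rank_mul_eq_right_of_isUnit_det _ _ hdet, Matrix.rank_diagonal]
  have hsum := LinearMap.finrank_range_add_finrank_ker
    (P * Matrix.diagonal (fun i => d i - μ) * P⁻¹).mulVecLin
  rw [hrank, finrank_fintype_fun_eq_card] at hsum
  have hcompl := Fintype.card_subtype_compl (fun i => d i = μ)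
  have hle := Fintype.card_subtype_le (fun i => d i = μ)
  simp only [sub_ne_zero, ne_eq] at hsum
  rw [End.eigenspace_def, hsub]
  omega

/-- Columns are eigenvectors of `𝒜(ξ)`, where `ν` stands for `|ξ|`. -/
def constraintEigenvectors (ξ₁ ξ₂ ν : ℝ) : Matrix (Fin 9) (Fin 9) ℝ :=
  !![0, 0, 0, 0, 0, ν, 0, -ν, 0;
     0, 0, 0, 0, 0, 0, ν, 0, -ν;
     -ξ₂, 0, 1, 0, 0, 0, 0, 0, 0;
     ξ₁, 0, 0, 0, 0, -ξ₂, ξ₁, -ξ₂, ξ₁;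
     0, -ξ₂, 0, 0, 0, ξ₂, -ξ₁, ξ₂, -ξ₁;
     0, ξ₁, 1, 0, 0, 0, 0, 0, 0;
     0, 0, 1, 0, 0, ξ₁, ξ₂, ξ₁, ξ₂;
     0, 0, 0, 1, 0, 0, 0, 0, 0;
     0, 0, 0, 0, 1, 0, 0, 0, 0]

/-- The eigenvalues belonging to the columns of `constraintEigenvectors`. -/
def constraintEigenvalues (ν : ℝ) : Fin 9 → ℝ := ![0, 0, 0, 0, 0, ν, ν, -ν, -ν]

theorem constraintSymbol_mul_eigenvectors {ξ₁ ξ₂ ν : ℝ} (hν : ν ^ 2 = ξ₁ ^ 2 + ξ₂ ^ 2) :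
    constraintSymbol ξ₁ ξ₂ * constraintEigenvectors ξ₁ ξ₂ ν =
      constraintEigenvectors ξ₁ ξ₂ ν * Matrix.diagonal (constraintEigenvalues ν) := by
  ext i j
  rw [Matrix.mul_diagonal]
  fin_cases i <;> fin_cases j <;>
    simp [constraintSymbol, constraintEigenvectors, constraintEigenvalues, Matrix.mul_apply,
      Fin.sum_univ_succ] <;>
    grind

theorem isUnit_constraintEigenvectors {ξ₁ ξ₂ ν : ℝ} (hν : ν ^ 2 = ξ₁ ^ 2 + ξ₂ ^ 2)
    (hν0 : ν ≠ 0) : IsUnit (constraintEigenvectors ξ₁ ξ₂ ν) := by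
  rw [← Matrix.mulVec_injective_iff_isUnit]
  refine (injective_iff_map_eq_zero (constraintEigenvectors ξ₁ ξ₂ ν).mulVecLin).2 fun v hv => ?_
  have hrow : ∀ i, ∑ j, constraintEigenvectors ξ₁ ξ₂ ν i j * v j = 0 := fun i => congrFun hv i
  have eM₁ : ν * v 5 - ν * v 7 = 0 := by
    simpa [constraintEigenvectors, Fin.sum_univ_succ, sub_eq_add_neg] using hrow 0
  have eM₂ : ν * v 6 - ν * v 8 = 0 := by
    simpa [constraintEigenvectors, Fin.sum_univ_succ, sub_eq_add_neg] using hrow 1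
  have eU₁₁ := hrow 2
  have eU₁₂ := hrow 3
  have eU₂₁ := hrow 4
  have eU₂₂ := hrow 5
  have eH := hrow 6
  have eN₁ := hrow 7
  have eN₂ := hrow 8
  simp [constraintEigenvectors, Fin.sum_univ_succ] at eU₁₁ eU₁₂ eU₂₁ eU₂₂ eH eN₁ eN₂
  have of_sq_mul {x : ℝ} (h : ν ^ 2 * x = 0) : x = 0 :=
    (mul_eq_zero.1 h).resolve_left (pow_ne_zero 2 hν0)
  have h2 : v 2 = 0 := of_sq_mul <| by
    linear_combination ξ₁ * (ξ₁ * eU₁₁ + ξ₂ * eU₁₂) + ξ₂ * (ξ₁ * eU₂₁ + ξ₂ * eU₂₂) + v 2 * hν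
  have hskew : -ξ₂ * (v 5 + v 7) + ξ₁ * (v 6 + v 8) = 0 := of_sq_mul <| by
    linear_combination ξ₂ * (ξ₁ * eU₁₁ + ξ₂ * eU₁₂) - ξ₁ * (ξ₁ * eU₂₁ + ξ₂ * eU₂₂) +
      (-ξ₂ * (v 5 + v 7) + ξ₁ * (v 6 + v 8)) * hν
  have h0 : v 0 = 0 := of_sq_mul <| by
    linear_combination ξ₁ * (eU₁₂ - hskew) + ξ₂ * (h2 - eU₁₁) + v 0 * hν
  have h1 : v 1 = 0 := of_sq_mul <| by
    linear_combination ξ₁ * (eU₂₂ - h2) - ξ₂ * (eU₂₁ + hskew) + v 1 * hν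
  have h57 : v 5 + v 7 = 0 := of_sq_mul <| by
    linear_combination ξ₁ * (eH - h2) - ξ₂ * hskew + (v 5 + v 7) * hν
  have h68 : v 6 + v 8 = 0 := of_sq_mul <| by
    linear_combination ξ₂ * (eH - h2) + ξ₁ * hskew + (v 6 + v 8) * hν
  have h57' : v 5 - v 7 = 0 := of_sq_mul <| by linear_combination ν * eM₁
  have h68' : v 6 - v 8 = 0 := of_sq_mul <| by linear_combination ν * eM₂
  ext i
  fin_cases i <;> simp <;> linarith

/-- For `ξ ≠ 0`, the matrix `𝒜(ξ)` is diagonalizable over `ℝ`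
with spectrum exactly `{0, |ξ|, −|ξ|}` and multiplicities `5, 2, 2`
(the eigenvalues and multiplicities are independent of the direction of `ξ`). -/
theorem constraintSymbol_spectrum (ξ₁ ξ₂ : ℝ) (hξ : (ξ₁, ξ₂) ≠ (0, 0))
    (ν : ℝ) (hν : ν = Real.sqrt (ξ₁ ^ 2 + ξ₂ ^ 2)) :
    (∀ μ : ℝ, Module.End.HasEigenvalue (constraintSymbol ξ₁ ξ₂).mulVecLin μ ↔
        (μ = 0 ∨ μ = ν ∨ μ = -ν)) ∧
    Module.finrank ℝ
      (Module.End.eigenspace (constraintSymbol ξ₁ ξ₂).mulVecLin 0) = 5 ∧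
    Module.finrank ℝ
      (Module.End.eigenspace (constraintSymbol ξ₁ ξ₂).mulVecLin ν) = 2 ∧
    Module.finrank ℝ
      (Module.End.eigenspace (constraintSymbol ξ₁ ξ₂).mulVecLin (-ν)) = 2 ∧
    (∃ P D : Matrix (Fin 9) (Fin 9) ℝ, IsUnit P ∧ D.IsDiag ∧
        constraintSymbol ξ₁ ξ₂ = P * D * P⁻¹) := by
  have hsq : ν ^ 2 = ξ₁ ^ 2 + ξ₂ ^ 2 := by rw [hν, Real.sq_sqrt (by positivity)]
  have hν0 : ν ≠ 0 := by
    rintro rfl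
    refine hξ (Prod.ext ?_ ?_) <;> nlinarith [sq_nonneg ξ₁, sq_nonneg ξ₂]
  have hP := isUnit_constraintEigenvectors hsq hν0
  have hdiag : constraintSymbol ξ₁ ξ₂ = constraintEigenvectors ξ₁ ξ₂ ν *
      Matrix.diagonal (constraintEigenvalues ν) * (constraintEigenvectors ξ₁ ξ₂ ν)⁻¹ := by
    rw [← constraintSymbol_mul_eigenvectors hsq,
      Matrix.mul_nonsing_inv_cancel_right _ _ ((Matrix.isUnit_iff_isUnit_det _).1 hP)]
  have hfin : ∀ μ, Module.finrank ℝ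
      (Module.End.eigenspace (constraintSymbol ξ₁ ξ₂).mulVecLin μ) =
      Fintype.card {i // constraintEigenvalues ν i = μ} := fun μ => by
    rw [hdiag, Matrix.finrank_eigenspace_conj_diagonal hP]
  have hneg : -ν ≠ ν := fun h => hν0 (by linarith)
  refine ⟨fun μ => ?_, ?_, ?_, ?_, _, _, hP, Matrix.isDiag_diagonal _, hdiag⟩
  · rw [Module.End.hasEigenvalue_iff, ne_eq, ← Submodule.finrank_eq_zero (R := ℝ), hfin,
      Fintype.card_eq_zero_iff, not_isEmpty_iff, nonempty_subtype]
    simp only [constraintEigenvalues, Fin.exists_fin_succ, eq_comm (a := μ)]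
    simp
  all_goals
    rw [hfin, Fintype.card_subtype, Finset.card_filter]
    simp [-Finset.sum_boole, constraintEigenvalues, Fin.sum_univ_succ, hν0, hν0.symm, hneg,
      hneg.symm]
end
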